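/- Let k be an algebraically closed field of characteristic p > 0 and let r, s be integers with 1 ≤ r, s ≤ p. Let N_r and N_s be nilpotent single Jordan blocks (nilpotent of index r, resp. s) on k^r and k^s. Then the endomorphism N_r ⊗ 1 + 1 ⊗ N_s of k^r ⊗ k^s is nilpotent of index at most p, and its Jordan type coincides with that of u_r ⊗ u_s − 1 for unipotent Jordan blocks: for 1 ≤ r, s ≤ p−1, with c = min(r, s, p−r, p−s) and m = (r·s − c·|r−s| − c²)/p, the Jordan type of N_r ⊗ 1 + 1 ⊗ N_s on k^r ⊗ k^s consists of the blocks of sizes |r−s|+1, |r−s|+3, ..., |r−s|+2c−1 together with m blocks of size p. (These are the representations of the Frobenius kernel G_{a,1}, i.e., modules over the Hopf algebra k[x]/(x^p) with primitive x, whose tensor product decompositions coincide with those for the cyclic group C_p.) -/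

import Mathlib

/-- The nilpotent single Jordan block of size `s` (ones on the superdiagonal); this is the
action of the primitive generator `x` of `k[x]/(x^p)` on the `G_{a,1}`-module `k^s`. -/
def jordanN (k : Type) [Field k] (s : ℕ) : Matrix (Fin s) (Fin s) k :=
  Matrix.of fun i j => if (i : ℕ) + 1 = (j : ℕ) then 1 else 0

/-- The operator `N_r ⊗ 1 + 1 ⊗ N_s` on `k^r ⊗ k^s`: the action of the primitive
generator `x` of `k[x]/(x^p)` on the tensor product of the `G_{a,1}`-modules
`k^r` and `k^s`. -/
noncomputable def tensorN (k : Type) [Field k] (r s : ℕ) :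
    TensorProduct k (Fin r → k) (Fin s → k) →ₗ[k] TensorProduct k (Fin r → k) (Fin s → k) :=
  TensorProduct.map ((jordanN k r).mulVecLin) LinearMap.id +
    TensorProduct.map LinearMap.id ((jordanN k s).mulVecLin)

/-
Padding tensors by zero to functions on `ℕ × ℕ` turns `T = N_r ⊗ 1 + 1 ⊗ N_s` into the sum of the
two coordinate shifts, which lowers the degree `i + j` by one and is the lowering operator of an
`𝔰𝔩₂`-action. The commuting summands of `T` have vanishing `p`-th powers, so `T ^ p = 0` by
Frobenius.

For `δ < min r s` with `n = r + s - 2 - 2 * δ < p`, an explicit primitive vector `w` of weight `n`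
generates a string of length `n + 1` ending in degree `δ`: the `𝔰𝔩₂`-relations give `T ^ n w ≠ 0`,
and `T ^ (n + 1) w = 0` because the raising operator kills it but is injective in degree `δ - 1`.
For `δ + p < r + s`, the basis tensor `e_(r-1) ⊗ e_(δ+p-r)` generates a string of length `p` ending
in degree `δ`, because `T ^ (p - 1)` maps it to a vector with the coefficient
`(p - 1).choose (r - 1) ≠ 0`. For suitable distinct `δ` the last vectors of these strings are
linearly independent and the lengths add up to `r * s`, so the strings form a Jordan basis.
-/

open scoped Matrix Nat TensorProduct

section LinearAlgebra

theorem injective_of_disjoint_ker {R V W : Type*} [Ring R] [AddCommGroup V] [Module R V]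
    [AddCommGroup W] [Module R W] {g : W →ₗ[R] V} {N : Module.End R W} {T : Module.End R V}
    (hcomm : g ∘ₗ N = T ∘ₗ g) (hN : IsNilpotent N)
    (hdisj : Disjoint (LinearMap.ker g) (LinearMap.ker N)) : Function.Injective g := by
  obtain ⟨t, ht⟩ := hN
  suffices key : ∀ t w, (N ^ t) w = 0 → g w = 0 → w = 0 from
    (injective_iff_map_eq_zero g).2 fun w => key t w (by rw [ht, LinearMap.zero_apply])
  intro t
  induction t with
  | zero => exact fun w hw _ => hw
  | succ t ih =>
    intro w hNw hgw
    have hgN : g (N w) = 0 := by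
      rw [← LinearMap.comp_apply, hcomm, LinearMap.comp_apply, hgw, map_zero]
    have hNw_zero : N w = 0 := ih (N w) (by rwa [← Module.End.mul_apply, ← pow_succ]) hgN
    exact Submodule.disjoint_def.1 hdisj w hgw hNw_zero

theorem linearIndependent_of_pairwise_disjoint_support {R ι α : Type*} [Ring R] [NoZeroDivisors R]
    {f : ι → α → R} (hne : ∀ i, f i ≠ 0)
    (hdisj : Pairwise (Function.onFun Disjoint fun i => Function.support (f i))) :
    LinearIndependent R f := by
  rw [linearIndependent_iff']
  intro S g hg i hi
  obtain ⟨a, ha⟩ := Function.ne_iff.1 (hne i)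
  have hother : ∀ j ∈ S, j ≠ i → (g j • f j) a = 0 := by
    intro j _ hji
    have hja : f j a = 0 := Function.notMem_support.1 (Set.disjoint_right.1 (hdisj hji) ha)
    rw [Pi.smul_apply, hja, smul_zero]
  have hsum := congrFun hg a
  rw [Finset.sum_apply, Finset.sum_eq_single_of_mem i hi hother] at hsum
  exact (mul_eq_zero.1 hsum).resolve_right ha

end LinearAlgebra

section JordanBlock

variable {k : Type} [Field k] {s : ℕ}

theorem jordanN_mulVec_apply (v : Fin s → k) (i : Fin s) :
    (jordanN k s *ᵥ v) i = Function.extend Fin.val v 0 (i + 1 : ℕ) := by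
  simp only [Matrix.mulVec, dotProduct, jordanN, Matrix.of_apply, ite_mul, one_mul, zero_mul]
  by_cases hi : (i : ℕ) + 1 < s
  · have hval : ∀ j : Fin s, (i : ℕ) + 1 = j ↔ ⟨i + 1, hi⟩ = j := fun j => by rw [Fin.ext_iff]
    simp only [hval, Finset.sum_ite_eq, Finset.mem_univ, if_true]
    exact (Fin.val_injective.extend_apply v 0 ⟨i + 1, hi⟩).symm
  · have hout : ¬ ∃ j : Fin s, (j : ℕ) = i + 1 := by
      rintro ⟨j, hj⟩
      omega
    rw [Function.extend_apply' _ _ _ hout]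
    exact Finset.sum_eq_zero fun j _ => if_neg fun hj => hout ⟨j, hj.symm⟩

theorem extend_jordanN_mulVec (v : Fin s → k) (n : ℕ) :
    Function.extend Fin.val (jordanN k s *ᵥ v) 0 n = Function.extend Fin.val v 0 (n + 1) := by
  by_cases hn : ∃ i : Fin s, (i : ℕ) = n
  · obtain ⟨i, rfl⟩ := hn
    rw [Fin.val_injective.extend_apply, jordanN_mulVec_apply]
  · have hn_succ : ¬ ∃ i : Fin s, (i : ℕ) = n + 1 := by
      rintro ⟨i, hi⟩
      exact hn ⟨⟨n, by omega⟩, rfl⟩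
    rw [Function.extend_apply' _ _ _ hn, Function.extend_apply' _ _ _ hn_succ]
    rfl

theorem extend_jordanN_mulVecLin_pow (v : Fin s → k) (t n : ℕ) :
    Function.extend Fin.val (((jordanN k s).mulVecLin ^ t) v) 0 n =
      Function.extend Fin.val v 0 (n + t) := by
  induction t generalizing n with
  | zero => rfl
  | succ t ih =>
    rw [pow_succ', Module.End.mul_apply, Matrix.mulVecLin_apply, extend_jordanN_mulVec, ih,
      add_right_comm, add_assoc]

theorem jordanN_mulVecLin_pow_self : (jordanN k s).mulVecLin ^ s = 0 := by
  refine LinearMap.ext fun v => funext fun i => ?_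
  have hout : ¬ ∃ j : Fin s, (j : ℕ) = i + s := by
    rintro ⟨j, hj⟩
    omega
  rw [← Fin.val_injective.extend_apply (((jordanN k s).mulVecLin ^ s) v) 0 i,
    extend_jordanN_mulVecLin_pow, Function.extend_apply' _ _ _ hout]
  rfl

theorem eq_single_of_jordanN_mulVec_eq_zero {v : Fin s → k} (hv : jordanN k s *ᵥ v = 0)
    (hs : 0 < s) : v = Pi.single ⟨0, hs⟩ (v ⟨0, hs⟩) := by
  funext ⟨j, hj⟩
  cases j with
  | zero => rw [Pi.single_eq_same]
  | succ j =>
    have hcoord : Function.extend Fin.val v 0 ((⟨j + 1, hj⟩ : Fin s) : ℕ) = 0 :=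
      (jordanN_mulVec_apply v ⟨j, by omega⟩).symm.trans (congrFun hv _)
    rw [Fin.val_injective.extend_apply] at hcoord
    rw [hcoord, Pi.single_eq_of_ne (by simp [Fin.ext_iff])]

end JordanBlock

section JordanStrings

variable {k : Type} [Field k] {V : Type*} [AddCommGroup V] [Module k V] {ι : Type*}

/-- The map `k^l → V` sending the standard basis to the string `T^(l-1) w, …, T w, w`; the order is
reversed because `jordanN` lowers the index of a basis vector. -/
noncomputable def stringMap (T : Module.End k V) (l : ℕ) (w : V) : (Fin l → k) →ₗ[k] V :=
  Fintype.linearCombination k fun j : Fin l => (T ^ (j.rev : ℕ)) w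

theorem stringMap_single (T : Module.End k V) (l : ℕ) (w : V) (j : Fin l) (a : k) :
    stringMap T l w (Pi.single j a) = a • (T ^ (j.rev : ℕ)) w :=
  Fintype.linearCombination_apply_single ..

theorem stringMap_comp_jordanN {T : Module.End k V} {l : ℕ} {w : V} (hw : (T ^ l) w = 0) :
    stringMap T l w ∘ₗ (jordanN k l).mulVecLin = T ∘ₗ stringMap T l w := by
  refine (Pi.basisFun k (Fin l)).ext fun j => ?_
  have hT : T (stringMap T l w (Pi.single j 1)) = (T ^ ((j.rev : ℕ) + 1)) w := by
    rw [stringMap_single, one_smul, pow_succ', Module.End.mul_apply]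
  simp only [Pi.basisFun_apply, LinearMap.comp_apply, Matrix.mulVecLin_apply,
    Matrix.mulVec_single_one, hT]
  obtain ⟨j, hj⟩ := j
  cases j with
  | zero =>
    have hcol : (jordanN k l).col ⟨0, hj⟩ = 0 := by
      ext i
      simp [jordanN]
    have hrev : ((⟨0, hj⟩ : Fin l).rev : ℕ) + 1 = l := by
      simp only [Fin.val_rev]
      omega
    rw [hcol, map_zero, hrev, hw]
  | succ j =>
    have hcol : (jordanN k l).col ⟨j + 1, hj⟩ = Pi.single ⟨j, by omega⟩ 1 := by
      ext i
      simp [jordanN, Pi.single_apply, Fin.ext_iff]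
    have hrev : ((⟨j + 1, hj⟩ : Fin l).rev : ℕ) + 1 = ((⟨j, by omega⟩ : Fin l).rev : ℕ) := by
      simp only [Fin.val_rev]
      omega
    rw [hcol, stringMap_single, one_smul, hrev]

/-- The block-diagonal nilpotent operator with Jordan blocks of sizes `l i`. -/
def jordanBlocks (k : Type) [Field k] (l : ι → ℕ) : Module.End k (∀ i, Fin (l i) → k) :=
  LinearMap.pi fun i => (jordanN k (l i)).mulVecLin ∘ₗ LinearMap.proj i

theorem jordanBlocks_pow_apply (l : ι → ℕ) (t : ℕ) (v : ∀ i, Fin (l i) → k) (i : ι) :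
    (jordanBlocks k l ^ t) v i = ((jordanN k (l i)).mulVecLin ^ t) (v i) := by
  induction t with
  | zero => rfl
  | succ t ih =>
    rw [pow_succ', pow_succ', Module.End.mul_apply, Module.End.mul_apply, ← ih]
    rfl

theorem isNilpotent_jordanBlocks [Finite ι] (l : ι → ℕ) :
    IsNilpotent (jordanBlocks k l) := by
  cases nonempty_fintype ι
  refine ⟨∑ i, l i, LinearMap.ext fun v => funext fun i => ?_⟩
  have hle : l i ≤ ∑ i, l i := Finset.single_le_sum (fun _ _ => Nat.zero_le _) (Finset.mem_univ i)
  rw [jordanBlocks_pow_apply, pow_eq_zero_of_le hle jordanN_mulVecLin_pow_self]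
  rfl

theorem exists_equiv_jordanBlocks [Fintype ι] [FiniteDimensional k V] (T : Module.End k V)
    (l : ι → ℕ) (w : ι → V) (hw : ∀ i, (T ^ l i) (w i) = 0)
    (hindep : LinearIndependent k fun i => (T ^ (l i - 1)) (w i))
    (hdim : ∑ i, l i = Module.finrank k V) :
    ∃ e : V ≃ₗ[k] (∀ i, Fin (l i) → k), ∀ x, e (T x) = jordanBlocks k l (e x) := by
  have hl : ∀ i, 0 < l i := fun i => Nat.pos_of_ne_zero fun hzero =>
    hindep.ne_zero i (by simpa only [hzero] using hw i)
  let g : (∀ i, Fin (l i) → k) →ₗ[k] V := ∑ i, stringMap T (l i) (w i) ∘ₗ LinearMap.proj i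
  have g_apply : ∀ v, g v = ∑ i, stringMap T (l i) (w i) (v i) := fun v => by
    simp only [g, LinearMap.sum_apply, LinearMap.comp_apply, LinearMap.proj_apply]
  have hcomm : g ∘ₗ jordanBlocks k l = T ∘ₗ g := by
    ext1 v
    rw [LinearMap.comp_apply, LinearMap.comp_apply, g_apply, g_apply, map_sum]
    exact Finset.sum_congr rfl fun i _ =>
      LinearMap.congr_fun (stringMap_comp_jordanN (hw i)) (v i)
  have hdisj : Disjoint (LinearMap.ker g) (LinearMap.ker (jordanBlocks k l)) := by
    refine Submodule.disjoint_def.2 fun v hgv hNv => ?_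
    have hv : ∀ i, v i = Pi.single ⟨0, hl i⟩ (v i ⟨0, hl i⟩) := fun i =>
      eq_single_of_jordanN_mulVec_eq_zero (congrFun hNv i) (hl i)
    have hsum : ∑ i, v i ⟨0, hl i⟩ • (T ^ (l i - 1)) (w i) = 0 := by
      rw [← LinearMap.mem_ker.1 hgv, g_apply]
      refine Finset.sum_congr rfl fun i _ => ?_
      conv_rhs => rw [hv i, stringMap_single, Fin.val_rev]
    funext i
    rw [hv i, Fintype.linearIndependent_iff.1 hindep _ hsum i, Pi.single_zero, Pi.zero_apply]
  have hfinrank : Module.finrank k (∀ i, Fin (l i) → k) = Module.finrank k V := by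
    rw [Module.finrank_pi_fintype, ← hdim]
    exact Finset.sum_congr rfl fun i _ => Module.finrank_fin_fun k
  let e := LinearEquiv.ofInjectiveOfFinrankEq g
    (injective_of_disjoint_ker hcomm (isNilpotent_jordanBlocks l) hdisj) hfinrank
  refine ⟨e.symm, fun x => ?_⟩
  rw [LinearEquiv.symm_apply_eq]
  exact (congrArg T (e.apply_symm_apply x)).symm.trans
    (LinearMap.congr_fun hcomm (e.symm x)).symm

end JordanStrings

-- Not `IsSl2Triple`: its `h ≠ 0` fails in the application below when `p = 2` and `r + s` is even.
section Sl2

variable {R M : Type*} [CommRing R] [AddCommGroup M] [Module R M] {h e f : Module.End R M}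
  {m : M} {μ : R}

theorem weight_pow_apply (hf : ⁅h, f⁆ = -(2 • f)) (hm : h m = μ • m) (t : ℕ) :
    h ((f ^ t) m) = (μ - 2 * t) • (f ^ t) m := by
  induction t with
  | zero => simpa using hm
  | succ t ih =>
    have hcomm : ∀ x, h (f x) = f (h x) - (2 : R) • f x := fun x => by
      have := LinearMap.congr_fun hf x
      simp only [Ring.lie_def, LinearMap.sub_apply, Module.End.mul_apply, LinearMap.neg_apply,
        LinearMap.smul_apply] at this
      rw [ofNat_smul_eq_nsmul, sub_eq_iff_eq_add.1 this]
      abel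
    rw [pow_succ', Module.End.mul_apply, hcomm, ih, map_smul]
    push_cast
    module

theorem raise_pow_succ_apply (hef : ⁅e, f⁆ = h) (hf : ⁅h, f⁆ = -(2 • f)) (hm : h m = μ • m)
    (he : e m = 0) (t : ℕ) :
    e ((f ^ (t + 1)) m) = ((t + 1) * (μ - t)) • (f ^ t) m := by
  have hcomm : ∀ x, e (f x) = f (e x) + h x := fun x => by
    simp only [← hef, Ring.lie_def, LinearMap.sub_apply, Module.End.mul_apply, add_sub_cancel]
  induction t with
  | zero => simp [hcomm, he, hm]
  | succ t ih =>
    rw [pow_succ' f (t + 1), Module.End.mul_apply, hcomm, ih, weight_pow_apply hf hm, map_smul,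
      ← Module.End.mul_apply, ← pow_succ']
    push_cast
    module

theorem lower_pow_apply_ne_zero [IsDomain R] [Module.IsTorsionFree R M] (hef : ⁅e, f⁆ = h)
    (hf : ⁅h, f⁆ = -(2 • f)) (hm : h m = μ • m) (he : e m = 0) (hm_ne : m ≠ 0) {t : ℕ}
    (ht : ∀ j < t, ((j + 1) * (μ - j) : R) ≠ 0) : (f ^ t) m ≠ 0 := by
  induction t with
  | zero => exact hm_ne
  | succ t ih =>
    intro hzero
    have hraise := raise_pow_succ_apply hef hf hm he t
    rw [hzero, map_zero] at hraise
    exact smul_ne_zero (ht t t.lt_succ_self) (ih fun j hj => ht j (hj.trans t.lt_succ_self))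
      hraise.symm

end Sl2

section Model

variable {R : Type*} [CommRing R]

/-- The operator `x ⊗ 1 + 1 ⊗ x` in coordinates, the tensor product being padded by zero to
functions on `ℕ × ℕ`, so that it becomes the sum of the two coordinate shifts. -/
def totalShift (R : Type*) [CommRing R] : Module.End R (ℕ × ℕ → R) :=
  LinearMap.funLeft R R (Prod.map Nat.succ id) + LinearMap.funLeft R R (Prod.map id Nat.succ)

theorem totalShift_apply (v : ℕ × ℕ → R) (i j : ℕ) :
    totalShift R v (i, j) = v (i + 1, j) + v (i, j + 1) := rfl

/-- `v` is homogeneous of degree `D`: it is supported on the antidiagonal `i + j = D`. -/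
def IsHomogeneous (D : ℕ) (v : ℕ × ℕ → R) : Prop :=
  ∀ ⦃i j : ℕ⦄, i + j ≠ D → v (i, j) = 0

theorem IsHomogeneous.totalShift_pow_apply {D : ℕ} {v : ℕ × ℕ → R} (hv : IsHomogeneous D v)
    {t i j : ℕ} (h : i + j + t ≠ D) : (totalShift R ^ t) v (i, j) = 0 := by
  induction t generalizing i j with
  | zero => exact hv h
  | succ t ih =>
    rw [pow_succ', Module.End.mul_apply, totalShift_apply, ih (by omega), ih (by omega), add_zero]

theorem IsHomogeneous.totalShift_pow {D t : ℕ} {v : ℕ × ℕ → R} (hv : IsHomogeneous (D + t) v) :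
    IsHomogeneous D ((totalShift R ^ t) v) :=
  fun _ _ h => hv.totalShift_pow_apply (by omega)

theorem IsHomogeneous.disjoint_support {D E : ℕ} {v w : ℕ × ℕ → R} (hv : IsHomogeneous D v)
    (hw : IsHomogeneous E w) (hDE : D ≠ E) :
    Disjoint (Function.support v) (Function.support w) := by
  refine Set.disjoint_left.2 fun ⟨i, j⟩ hvq hwq => hDE ?_
  rw [← not_imp_comm.1 (@hv i j) hvq, not_imp_comm.1 (@hw i j) hwq]

theorem funLeft_pow {α : Type*} (f : α → α) (t : ℕ) :
    (LinearMap.funLeft R R f : Module.End R (α → R)) ^ t = LinearMap.funLeft R R f^[t] := by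
  induction t with
  | zero => rfl
  | succ t ih =>
    rw [pow_succ, ih, Module.End.mul_eq_comp, ← LinearMap.funLeft_comp, Function.iterate_succ']

theorem totalShift_pow_apply (t : ℕ) (v : ℕ × ℕ → R) (i j : ℕ) :
    (totalShift R ^ t) v (i, j) =
      ∑ q ∈ Finset.HasAntidiagonal.antidiagonal t, (t.choose q.1 : R) * v (i + q.1, j + q.2) := by
  have hcomm : Commute (LinearMap.funLeft R R (Prod.map Nat.succ id) : Module.End R (ℕ × ℕ → R))
      (LinearMap.funLeft R R (Prod.map id Nat.succ)) := rfl
  rw [totalShift, hcomm.add_pow', LinearMap.sum_apply, Finset.sum_apply]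
  refine Finset.sum_congr rfl fun q _ => ?_
  rw [funLeft_pow, funLeft_pow, Prod.map_iterate, Prod.map_iterate, LinearMap.smul_apply,
    Pi.smul_apply, nsmul_eq_mul, Module.End.mul_apply, LinearMap.funLeft_apply,
    LinearMap.funLeft_apply]
  simp only [Prod.map_apply, Nat.succ_iterate, Function.iterate_id, id_eq]

theorem totalShift_pow_single_apply (a b i j : ℕ) :
    (totalShift R ^ (a + b)) (Pi.single (i + a, j + b) 1) (i, j) = (a + b).choose a := by
  rw [totalShift_pow_apply, Finset.sum_eq_single_of_mem (a, b)
    (Finset.HasAntidiagonal.mem_antidiagonal.2 rfl), Pi.single_eq_same, mul_one]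
  intro q _ hq
  rw [Pi.single_eq_of_ne, mul_zero]
  simpa only [ne_eq, Prod.ext_iff, Nat.add_left_cancel_iff] using hq

/-- The raising operator of the `𝔰𝔩₂`-action on `V(r-1) ⊗ V(s-1)` whose lowering operator is
`totalShift`. At `i = 0` or `j = 0` the truncated index is harmless, its coefficient being zero. -/
def raising (R : Type*) [CommRing R] (r s : ℕ) : Module.End R (ℕ × ℕ → R) where
  toFun v q := q.1 * (r - q.1) * v (q.1 - 1, q.2) + q.2 * (s - q.2) * v (q.1, q.2 - 1)
  map_add' v w := by
    ext q
    simp only [Pi.add_apply]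
    ring
  map_smul' a v := by
    ext q
    simp only [Pi.smul_apply, smul_eq_mul, RingHom.id_apply]
    ring

/-- The weight operator `[raising, totalShift]` of the `𝔰𝔩₂`-action on `V(r-1) ⊗ V(s-1)`. -/
def weight (R : Type*) [CommRing R] (r s : ℕ) : Module.End R (ℕ × ℕ → R) where
  toFun v q := (2 * (q.1 + q.2) + 2 - r - s) * v q
  map_add' v w := by
    ext q
    simp only [Pi.add_apply, mul_add]
  map_smul' a v := by
    ext q
    simp only [Pi.smul_apply, smul_eq_mul, RingHom.id_apply, mul_left_comm]

theorem raising_apply (r s : ℕ) (v : ℕ × ℕ → R) (i j : ℕ) :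
    raising R r s v (i, j) = i * (r - i) * v (i - 1, j) + j * (s - j) * v (i, j - 1) := rfl

theorem weight_apply (r s : ℕ) (v : ℕ × ℕ → R) (i j : ℕ) :
    weight R r s v (i, j) = (2 * (i + j) + 2 - r - s) * v (i, j) := rfl

theorem lie_raising_totalShift (r s : ℕ) : ⁅raising R r s, totalShift R⁆ = weight R r s := by
  refine LinearMap.ext fun v => funext fun ⟨i, j⟩ => ?_
  simp only [Ring.lie_def, LinearMap.sub_apply, Module.End.mul_apply, Pi.sub_apply,
    totalShift_apply, raising_apply, weight_apply]
  rcases i with _ | i <;> rcases j with _ | j <;>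
    simp only [Nat.cast_zero, Nat.cast_add, Nat.cast_one, Nat.add_sub_cancel, zero_add] <;> ring

theorem lie_weight_totalShift (r s : ℕ) :
    ⁅weight R r s, totalShift R⁆ = -(2 • totalShift R) := by
  refine LinearMap.ext fun v => funext fun ⟨i, j⟩ => ?_
  simp only [Ring.lie_def, LinearMap.sub_apply, Module.End.mul_apply, Pi.sub_apply,
    LinearMap.neg_apply, Pi.neg_apply, two_smul, LinearMap.add_apply, Pi.add_apply,
    totalShift_apply, weight_apply]
  push_cast
  ring

theorem IsHomogeneous.weight_eq_smul {r s n δ : ℕ} {v : ℕ × ℕ → R} (hv : IsHomogeneous (δ + n) v)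
    (hn : n + 2 * δ + 2 = r + s) : weight R r s v = (n : R) • v := by
  funext ⟨i, j⟩
  rw [weight_apply, Pi.smul_apply, smul_eq_mul]
  by_cases hij : i + j = δ + n
  · have hijR : (i : R) + j = δ + n := mod_cast congrArg (Nat.cast : ℕ → R) hij
    have hnR : (n : R) + 2 * δ + 2 = r + s := mod_cast congrArg (Nat.cast : ℕ → R) hn
    congr 1
    linear_combination 2 * hijR + hnR
  · rw [hv hij, mul_zero, mul_zero]

/-- The primitive vector of degree `r + s - 2 - δ` in `V(r-1) ⊗ V(s-1)`. Its coefficients solve the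
two-term recurrence `raising v = 0`, scaled so that they are integers. -/
def primitiveVector (R : Type*) [CommRing R] (r s δ : ℕ) (q : ℕ × ℕ) : R :=
  if q.1 < r ∧ q.2 < s ∧ q.1 + q.2 + δ + 2 = r + s then
    (-1) ^ q.1 * (q.1 ! * q.2 ! * δ.choose (r - 1 - q.1)) else 0

theorem primitiveVector_apply_eq_zero {r s δ i j : ℕ}
    (h : ¬ (i < r ∧ j < s ∧ i + j + δ + 2 = r + s)) : primitiveVector R r s δ (i, j) = 0 :=
  if_neg h

theorem raising_primitiveVector {r s δ : ℕ} (hr : δ < r) (hs : δ < s) :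
    raising R r s (primitiveVector R r s δ) = 0 := by
  funext ⟨i, j⟩
  rw [raising_apply, Pi.zero_apply]
  by_cases hij : (0 < i ∧ i < r) ∧ (0 < j ∧ j < s) ∧ i + j + δ + 1 = r + s
  · obtain ⟨⟨hi, hir⟩, ⟨hj, hjs⟩, hdeg⟩ := hij
    obtain ⟨i, rfl⟩ := Nat.exists_eq_succ_of_ne_zero hi.ne'
    obtain ⟨j, rfl⟩ := Nat.exists_eq_succ_of_ne_zero hj.ne'
    obtain ⟨a, rfl⟩ := Nat.exists_eq_add_of_lt hir
    obtain ⟨b, rfl⟩ := Nat.exists_eq_add_of_lt hjs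
    obtain rfl : δ = a + b + 1 := by omega
    have hchoose : ((a + b + 1).choose (a + 1) : R) * (a + 1) =
        (a + b + 1).choose a * (b + 1) := by
      have := Nat.choose_succ_right_eq (a + b + 1) a
      rw [show a + b + 1 - a = b + 1 by omega] at this
      exact_mod_cast congrArg (Nat.cast : ℕ → R) this
    have ha : i + 1 + a - i = a + 1 := by omega
    have hb : i + 1 + a - (i + 1) = a := by omega
    simp only [primitiveVector, Nat.succ_eq_add_one, Nat.add_sub_cancel]
    rw [if_pos (by omega), if_pos (by omega), ha, hb, Nat.factorial_succ, Nat.factorial_succ]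
    push_cast
    linear_combination ((-1) ^ i * (i + 1) * (j + 1) * i ! * j ! : R) * hchoose
  · have hleft : (i * (r - i) * primitiveVector R r s δ (i - 1, j) : R) = 0 := by
      rcases eq_or_ne i 0 with rfl | hi
      · simp
      rcases eq_or_ne i r with rfl | hir
      · simp
      rw [primitiveVector_apply_eq_zero (by omega), mul_zero]
    have hright : (j * (s - j) * primitiveVector R r s δ (i, j - 1) : R) = 0 := by
      rcases eq_or_ne j 0 with rfl | hj
      · simp
      rcases eq_or_ne j s with rfl | hjs
      · simp
      rw [primitiveVector_apply_eq_zero (by omega), mul_zero]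
    rw [hleft, hright, add_zero]

theorem isHomogeneous_primitiveVector {r s n δ : ℕ} (hn : n + 2 * δ + 2 = r + s) :
    IsHomogeneous (δ + n) (primitiveVector R r s δ) :=
  fun _ _ hij => primitiveVector_apply_eq_zero (by omega)

end Model

section CharP

theorem natCast_ne_zero_of_pos_of_lt {R : Type*} [AddGroupWithOne R] {p : ℕ} [CharP R p] {n : ℕ}
    (hpos : 0 < n) (hlt : n < p) : (n : R) ≠ 0 :=
  mt (CharP.cast_eq_zero_iff R p n).1 (Nat.not_dvd_of_pos_of_lt hpos hlt)

variable {R : Type*} [CommRing R] [IsDomain R] {p : ℕ} [CharP R p] {r s n δ : ℕ}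

theorem apply_eq_zero_of_raising_eq_zero {v : ℕ × ℕ → R} (hr : r ≤ p)
    (hv : raising R r s v = 0) {i j : ℕ} (hij : i + j + 1 < r) : v (i, j) = 0 := by
  have hcoeff : ((i + 1 : ℕ) * (r - (i + 1 : ℕ)) : R) ≠ 0 := by
    rw [← Nat.cast_sub (by omega)]
    exact mul_ne_zero (natCast_ne_zero_of_pos_of_lt (p := p) (by omega) (by omega))
      (natCast_ne_zero_of_pos_of_lt (p := p) (by omega) (by omega))
  have hraise := congrFun hv (i + 1, j)
  rw [raising_apply, Nat.add_sub_cancel] at hraise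
  refine (mul_eq_zero.1 ?_).resolve_left hcoeff
  cases j with
  | zero => simpa using hraise
  | succ j =>
    have hprev : v (i + 1, j) = 0 := apply_eq_zero_of_raising_eq_zero hr hv (by omega)
    simpa [hprev] using hraise

theorem primitiveVector_ne_zero [Fact p.Prime] (hr : r ≤ p) (hδr : δ < r) (hδs : δ < s)
    (hs : s ≤ p + δ) : primitiveVector R r s δ ≠ 0 := by
  refine Function.ne_iff.2 ⟨(r - 1, s - 1 - δ), ?_⟩
  have hfact : ∀ m < p, (m ! : R) ≠ 0 := fun m hm =>
    (IsUnit.natCast_factorial_iff_of_charP p |>.2 hm).ne_zero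
  rw [primitiveVector, if_pos (by omega), Nat.sub_self, Nat.choose_zero_right, Nat.cast_one,
    mul_one]
  exact mul_ne_zero (pow_ne_zero _ (neg_ne_zero.2 one_ne_zero))
    (mul_ne_zero (hfact _ (by omega)) (hfact _ (by omega)))

theorem totalShift_pow_succ_primitiveVector (hr : r ≤ p) (hδr : δ < r) (hδs : δ < s)
    (hn : n + 2 * δ + 2 = r + s) : (totalShift R ^ (n + 1)) (primitiveVector R r s δ) = 0 := by
  have hhom := isHomogeneous_primitiveVector (R := R) hn
  have hraise : raising R r s ((totalShift R ^ (n + 1)) (primitiveVector R r s δ)) = 0 := by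
    rw [raise_pow_succ_apply (lie_raising_totalShift r s) (lie_weight_totalShift r s)
      (hhom.weight_eq_smul hn) (raising_primitiveVector hδr hδs), sub_self, mul_zero, zero_smul]
  funext ⟨i, j⟩
  by_cases hij : i + j + (n + 1) = δ + n
  · exact apply_eq_zero_of_raising_eq_zero hr hraise (by omega)
  · exact hhom.totalShift_pow_apply hij

theorem totalShift_pow_primitiveVector_ne_zero [Fact p.Prime] (hr : r ≤ p) (hδr : δ < r)
    (hδs : δ < s) (hn : n + 2 * δ + 2 = r + s) (hnp : n < p) :
    (totalShift R ^ n) (primitiveVector R r s δ) ≠ 0 := by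
  refine lower_pow_apply_ne_zero (lie_raising_totalShift r s) (lie_weight_totalShift r s)
    ((isHomogeneous_primitiveVector hn).weight_eq_smul hn) (raising_primitiveVector hδr hδs)
    (primitiveVector_ne_zero hr hδr hδs (by omega)) fun j hj => mul_ne_zero ?_ ?_
  · exact_mod_cast natCast_ne_zero_of_pos_of_lt (R := R) (p := p) j.succ_pos (by omega)
  · rw [← Nat.cast_sub hj.le]
    exact natCast_ne_zero_of_pos_of_lt (p := p) (by omega) (by omega)

theorem natCast_choose_ne_zero [Fact p.Prime] {m : ℕ} (hnp : n < p) (hm : m ≤ n) :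
    (n.choose m : R) ≠ 0 := by
  have hfact : (n ! : R) ≠ 0 := (IsUnit.natCast_factorial_iff_of_charP p |>.2 hnp).ne_zero
  rw [← Nat.choose_mul_factorial_mul_factorial hm, Nat.cast_mul, Nat.cast_mul] at hfact
  exact left_ne_zero_of_mul (left_ne_zero_of_mul hfact)

end CharP

section TensorProduct

variable {k : Type} [Field k] {r s : ℕ}

/-- The coordinates of a tensor in the standard basis, padded by zero outside the `r × s` box. -/
noncomputable def coeffs (k : Type) [Field k] (r s : ℕ) :
    (Fin r → k) ⊗[k] (Fin s → k) →ₗ[k] ℕ × ℕ → k :=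
  Function.ExtendByZero.linearMap k (Prod.map Fin.val Fin.val) ∘ₗ
    ((Pi.basisFun k (Fin r)).tensorProduct (Pi.basisFun k (Fin s))).equivFun.toLinearMap

theorem valProd_injective :
    Function.Injective (Prod.map Fin.val Fin.val : Fin r × Fin s → ℕ × ℕ) :=
  Fin.val_injective.prodMap Fin.val_injective

theorem coeffs_injective : Function.Injective (coeffs k r s) :=
  (Function.extend_injective valProd_injective 0).comp (LinearEquiv.injective _)

theorem exists_coeffs_eq {v : ℕ × ℕ → k} (hv : ∀ i j, ¬ (i < r ∧ j < s) → v (i, j) = 0) :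
    ∃ x, coeffs k r s x = v := by
  let b := (Pi.basisFun k (Fin r)).tensorProduct (Pi.basisFun k (Fin s))
  refine ⟨b.equivFun.symm (v ∘ Prod.map Fin.val Fin.val), ?_⟩
  have hcoeffs : coeffs k r s (b.equivFun.symm (v ∘ Prod.map Fin.val Fin.val)) =
      Function.extend (Prod.map Fin.val Fin.val) (v ∘ Prod.map Fin.val Fin.val) 0 :=
    congrArg (fun w => Function.extend (Prod.map Fin.val Fin.val) w 0)
      (b.equivFun.apply_symm_apply _)
  rw [hcoeffs]
  funext ⟨i, j⟩
  by_cases hij : i < r ∧ j < s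
  · exact valProd_injective.extend_apply _ 0 (⟨i, hij.1⟩, ⟨j, hij.2⟩)
  · rw [Function.extend_apply', hv i j hij, Pi.zero_apply]
    rintro ⟨⟨a, b⟩, hab⟩
    simp only [Prod.map_apply, Prod.mk.injEq] at hab
    omega

theorem coeffs_tmul (a : Fin r → k) (b : Fin s → k) (i j : ℕ) :
    coeffs k r s (a ⊗ₜ b) (i, j) =
      Function.extend Fin.val a 0 i * Function.extend Fin.val b 0 j := by
  by_cases hij : (∃ a : Fin r, (a : ℕ) = i) ∧ ∃ b : Fin s, (b : ℕ) = j
  · obtain ⟨⟨i, rfl⟩, ⟨j, rfl⟩⟩ := hij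
    rw [Fin.val_injective.extend_apply, Fin.val_injective.extend_apply]
    refine (valProd_injective.extend_apply _ 0 (i, j)).trans ?_
    simp [Module.Basis.tensorProduct_repr_tmul_apply, mul_comm]
  · have hleft : coeffs k r s (a ⊗ₜ b) (i, j) = 0 := by
      refine Function.extend_apply' _ _ _ ?_
      rintro ⟨⟨a, b⟩, hab⟩
      exact hij ⟨⟨a, congrArg Prod.fst hab⟩, ⟨b, congrArg Prod.snd hab⟩⟩
    rw [hleft]
    rcases not_and_or.1 hij with hi | hj
    · rw [Function.extend_apply' _ _ _ hi, Pi.zero_apply, zero_mul]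
    · rw [Function.extend_apply' _ _ _ hj, Pi.zero_apply, mul_zero]

theorem coeffs_comp_tensorN : totalShift k ∘ₗ coeffs k r s = coeffs k r s ∘ₗ tensorN k r s := by
  refine TensorProduct.ext' fun a b => funext fun ⟨i, j⟩ => ?_
  simp only [tensorN, LinearMap.comp_apply, totalShift_apply, LinearMap.add_apply,
    TensorProduct.map_tmul, LinearMap.id_apply, map_add, Pi.add_apply, coeffs_tmul,
    Matrix.mulVecLin_apply, extend_jordanN_mulVec]

theorem coeffs_tensorN_pow (t : ℕ) (x : (Fin r → k) ⊗[k] (Fin s → k)) :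
    coeffs k r s ((tensorN k r s ^ t) x) = (totalShift k ^ t) (coeffs k r s x) :=
  (LinearMap.congr_fun (Module.End.commute_pow_left_of_commute coeffs_comp_tensorN t) x).symm

theorem tensorN_pow_char {p : ℕ} (hp : p.Prime) [CharP k p] (hr : r ≤ p) (hs : s ≤ p) :
    tensorN k r s ^ p = 0 := by
  have hcomm : Commute
      (TensorProduct.map (jordanN k r).mulVecLin (LinearMap.id : (Fin s → k) →ₗ[k] _))
      (TensorProduct.map LinearMap.id (jordanN k s).mulVecLin) := by
    simp only [Commute, SemiconjBy, Module.End.mul_eq_comp, ← TensorProduct.map_comp,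
      LinearMap.id_comp, LinearMap.comp_id]
  have hchar : (p : Module.End k ((Fin r → k) ⊗[k] (Fin s → k))) = 0 := by
    rw [← map_natCast (algebraMap k _), CharP.cast_eq_zero, map_zero]
  rw [tensorN, hcomm.add_pow_prime_eq hp, hchar, zero_mul, zero_mul, zero_mul, add_zero,
    TensorProduct.map_pow, TensorProduct.map_pow, pow_eq_zero_of_le hr jordanN_mulVecLin_pow_self,
    pow_eq_zero_of_le hs jordanN_mulVecLin_pow_self, TensorProduct.map_zero_left,
    TensorProduct.map_zero_right, add_zero]

/-- `x` heads a Jordan string `x, T x, …, T^(l-1) x` of length `l` of `T = tensorN k r s` whose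
last vector is homogeneous of degree `D`; strings with distinct `D` are independent. -/
structure HeadsString (l D : ℕ) (x : (Fin r → k) ⊗[k] (Fin s → k)) : Prop where
  pow_eq_zero : (tensorN k r s ^ l) x = 0
  last_ne_zero : (tensorN k r s ^ (l - 1)) x ≠ 0
  isHomogeneous : IsHomogeneous D (coeffs k r s ((tensorN k r s ^ (l - 1)) x))

theorem exists_equiv_jordanBlocks_of_headsString {ι : Type*} [Fintype ι] {l D : ι → ℕ}
    (hD : Function.Injective D)
    (hx : ∀ i, ∃ x : (Fin r → k) ⊗[k] (Fin s → k), HeadsString (l i) (D i) x)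
    (hdim : ∑ i, l i = r * s) :
    ∃ e : (Fin r → k) ⊗[k] (Fin s → k) ≃ₗ[k] (∀ i, Fin (l i) → k),
      ∀ x, e (tensorN k r s x) = jordanBlocks k l (e x) := by
  choose x hx using hx
  refine exists_equiv_jordanBlocks _ l x (fun i => (hx i).pow_eq_zero) ?_ ?_
  · refine LinearIndependent.of_comp (coeffs k r s)
      (linearIndependent_of_pairwise_disjoint_support (fun i => ?_) fun i j hij => ?_)
    · exact (map_ne_zero_iff _ coeffs_injective).2 (hx i).last_ne_zero
    · exact (hx i).isHomogeneous.disjoint_support (hx j).isHomogeneous (hD.ne hij)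
  · rw [hdim, Module.finrank_tensorProduct, Module.finrank_fin_fun, Module.finrank_fin_fun]

variable {p δ : ℕ} [Fact p.Prime] [CharP k p]

theorem exists_headsString_of_lt {n : ℕ} (hr : r ≤ p) (hδr : δ < r) (hδs : δ < s)
    (hn : n + 2 * δ + 2 = r + s) (hnp : n < p) :
    ∃ x : (Fin r → k) ⊗[k] (Fin s → k), HeadsString (n + 1) δ x := by
  obtain ⟨x, hx⟩ : ∃ x, coeffs k r s x = primitiveVector k r s δ :=
    exists_coeffs_eq fun i j hij => primitiveVector_apply_eq_zero (by tauto)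
  refine ⟨x, coeffs_injective ?_, fun hzero => ?_, ?_⟩
  · rw [coeffs_tensorN_pow, hx, totalShift_pow_succ_primitiveVector hr hδr hδs hn, map_zero]
  · apply totalShift_pow_primitiveVector_ne_zero (R := k) hr hδr hδs hn hnp
    rw [← hx, ← coeffs_tensorN_pow, ← Nat.add_sub_cancel (n := n) (m := 1), hzero, map_zero]
  · rw [coeffs_tensorN_pow, hx, Nat.add_sub_cancel]
    exact (isHomogeneous_primitiveVector hn).totalShift_pow

theorem exists_headsString_char (hr : r ≤ p) (hs : s ≤ p) (hδ : δ + p < r + s) :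
    ∃ x : (Fin r → k) ⊗[k] (Fin s → k), HeadsString p δ x := by
  have hp : p.Prime := Fact.out
  have hp_pos := hp.pos
  obtain ⟨b, hb⟩ : ∃ b, r - 1 + b = p - 1 := ⟨p - r, by omega⟩
  obtain ⟨x, hx⟩ : ∃ x, coeffs k r s x = Pi.single (0 + (r - 1), δ + b) 1 :=
    exists_coeffs_eq fun i j hij => Pi.single_eq_of_ne (by
      rw [ne_eq, Prod.mk.injEq]
      omega) 1
  refine ⟨x, ?_, fun hzero => ?_, ?_⟩
  · rw [tensorN_pow_char hp hr hs, LinearMap.zero_apply]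
  · have hcoeff := congrFun (coeffs_tensorN_pow (p - 1) x) (0, δ)
    rw [hzero, map_zero, hx, ← hb, totalShift_pow_single_apply, hb] at hcoeff
    exact natCast_choose_ne_zero (R := k) (p := p) (by omega) (by omega) hcoeff.symm
  · rw [coeffs_tensorN_pow, hx]
    refine IsHomogeneous.totalShift_pow fun i j hij => Pi.single_eq_of_ne ?_ 1
    rw [ne_eq, Prod.mk.injEq]
    omega

end TensorProduct

section BlockSizes

theorem sum_add_two_mul_add_one (c d : ℕ) :
    ∑ i : Fin c, (d + 2 * (i : ℕ) + 1) = c * d + c ^ 2 := by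
  induction c with
  | zero => simp
  | succ c ih =>
    rw [Fin.sum_univ_castSucc]
    simp only [Fin.val_castSucc, Fin.val_last, ih]
    ring

variable {p r s d c m : ℕ}

theorem numFreeBlocks_eq (hp : 0 < p) (hr : r ≤ p) (hs : s ≤ p) (hd : d = max r s - min r s)
    (hc : c = min (min r s) (min (p - r) (p - s))) (hm : (m : ℤ) * p = r * s - c * d - c ^ 2) :
    m = r + s - p := by
  have hfactor : (m : ℤ) * p = (min r s - c : ℕ) * (max r s + c : ℕ) := by
    rw [hm, hd, Nat.cast_sub min_le_max, Nat.cast_sub (by omega), Nat.cast_add, ← Nat.cast_mul,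
      ← min_mul_max r s, Nat.cast_mul]
    ring
  rcases le_total (r + s) p with hrs | hrs
  · rw [show min r s - c = 0 by omega] at hfactor
    have hm_zero : (m : ℤ) = 0 :=
      (mul_eq_zero.1 (hfactor.trans (by simp))).resolve_right (by exact_mod_cast hp.ne')
    omega
  · rw [show min r s - c = r + s - p by omega, show max r s + c = p by omega] at hfactor
    exact_mod_cast mul_right_cancel₀ (by exact_mod_cast hp.ne') hfactor

/-- The block sizes of the decomposition: `d + 1, d + 3, …, d + 2c - 1`, and `p` repeated `m`
times. -/
def blockSize (p d c m : ℕ) : Fin c ⊕ Fin m → ℕ :=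
  Sum.elim (fun i => d + 2 * i + 1) fun _ => p

/-- The degrees in which the strings of lengths `blockSize` end, `a` being the smaller of the
dimensions `r` and `s`. -/
def socleDegree (a c m : ℕ) : Fin c ⊕ Fin m → ℕ :=
  Sum.elim (fun i => a - 1 - i) fun j => j

theorem sum_blockSize (p d c m : ℕ) : ∑ i, blockSize p d c m i = c * d + c ^ 2 + m * p := by
  simp only [blockSize, Fintype.sum_sum_type, Sum.elim_inl, Sum.elim_inr, sum_add_two_mul_add_one,
    Finset.sum_const, Finset.card_univ, Fintype.card_fin, smul_eq_mul]

theorem socleDegree_injective {a : ℕ} (h : c + m ≤ a) :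
    Function.Injective (socleDegree a c m) := by
  refine Function.Injective.sumElim (fun i j hij => ?_) Fin.val_injective fun i j => ?_ <;> omega

theorem exists_headsString_blockSize {k : Type} [Field k] [Fact p.Prime] [CharP k p]
    (hr : r ≤ p) (hs : s ≤ p) (hd : d = max r s - min r s)
    (hc : c = min (min r s) (min (p - r) (p - s))) (hm : m = r + s - p) (i : Fin c ⊕ Fin m) :
    ∃ x : (Fin r → k) ⊗[k] (Fin s → k),
      HeadsString (blockSize p d c m i) (socleDegree (min r s) c m i) x := by
  rcases i with i | j
  · simp only [blockSize, socleDegree, Sum.elim_inl]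
    exact exists_headsString_of_lt hr (by omega) (by omega) (by omega) (by omega)
  · simp only [blockSize, socleDegree, Sum.elim_inr]
    exact exists_headsString_char hr hs (by omega)

end BlockSizes

theorem stmt15_general (p : ℕ) (hp : p.Prime) (k : Type) [Field k] [CharP k p] :
    (∀ r s : ℕ, r ≤ p → s ≤ p → (tensorN k r s) ^ p = 0)
    ∧ (∀ r s : ℕ, r ≤ p → s ≤ p →
        ∀ d c m : ℕ, d = max r s - min r s →
          c = min (min r s) (min (p - r) (p - s)) →
          (m : ℤ) * p = r * s - c * d - c ^ 2 →
          ∃ e : TensorProduct k (Fin r → k) (Fin s → k) ≃ₗ[k]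
              ((∀ i : Fin c, Fin (d + 2 * (i : ℕ) + 1) → k) × (Fin m → Fin p → k)),
            ∀ x, e (tensorN k r s x) =
              (LinearMap.prodMap
                (LinearMap.pi fun i : Fin c =>
                  ((jordanN k (d + 2 * (i : ℕ) + 1)).mulVecLin) ∘ₗ LinearMap.proj i)
                (LinearMap.pi fun j : Fin m =>
                  ((jordanN k p).mulVecLin) ∘ₗ LinearMap.proj j)) (e x)) := by
  refine ⟨fun r s hr hs => tensorN_pow_char hp hr hs, fun r s hr hs d c m hd hc hm => ?_⟩
  have := Fact.mk hp
  have hm_eq : m = r + s - p := numFreeBlocks_eq hp.pos hr hs hd hc hm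
  have hdim : ∑ i, blockSize p d c m i = r * s := by
    rw [sum_blockSize]
    zify
    linarith
  obtain ⟨e, he⟩ := exists_equiv_jordanBlocks_of_headsString
    (socleDegree_injective (by omega))
    (exists_headsString_blockSize (k := k) hr hs hd hc hm_eq) hdim
  let split := LinearEquiv.sumPiEquivProdPi k (Fin c) (Fin m) fun i => Fin (blockSize p d c m i) → k
  exact ⟨e.trans split, fun x => congrArg split (he x)⟩

/-- Over an algebraically closed field `k` of characteristic `p > 0`:
(1) for `1 ≤ r, s ≤ p` the operator `N_r ⊗ 1 + 1 ⊗ N_s` on `k^r ⊗ k^s` is nilpotent of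
index at most `p`;
(2) for `1 ≤ r, s ≤ p − 1`, with `d = |r−s|`, `c = min(r, s, p−r, p−s)` and
`m = (r·s − c·|r−s| − c²)/p`, its Jordan type consists of the nilpotent blocks of sizes
`|r−s|+1, |r−s|+3, …, |r−s|+2c−1` together with `m` blocks of size `p` (the `i`-th block,
`0 ≤ i < c`, has size `d + 2i + 1`). -/
theorem stmt15 (p : ℕ) (hp : p.Prime) (k : Type) [Field k] [IsAlgClosed k] [CharP k p] :
    (∀ r s : ℕ, 1 ≤ r → r ≤ p → 1 ≤ s → s ≤ p → (tensorN k r s) ^ p = 0)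
    ∧ (∀ r s : ℕ, 1 ≤ r → r ≤ p - 1 → 1 ≤ s → s ≤ p - 1 →
        ∀ d c m : ℕ, d = max r s - min r s →
          c = min (min r s) (min (p - r) (p - s)) →
          (m : ℤ) * p = r * s - c * d - c ^ 2 →
          ∃ e : TensorProduct k (Fin r → k) (Fin s → k) ≃ₗ[k]
              ((∀ i : Fin c, Fin (d + 2 * (i : ℕ) + 1) → k) × (Fin m → Fin p → k)),
            ∀ x, e (tensorN k r s x) =
              (LinearMap.prodMap
                (LinearMap.pi fun i : Fin c =>
                  ((jordanN k (d + 2 * (i : ℕ) + 1)).mulVecLin) ∘ₗ LinearMap.proj i)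
                (LinearMap.pi fun j : Fin m =>
                  ((jordanN k p).mulVecLin) ∘ₗ LinearMap.proj j)) (e x)) := by
  exact ⟨fun r s _ hr _ hs => (stmt15_general p hp k).1 r s hr hs, fun r s _ hr _ hs =>
    (stmt15_general p hp k).2 r s (hr.trans (Nat.sub_le p 1)) (hs.trans (Nat.sub_le p 1))⟩
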